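/- For ν = 8π, the infimum over d ≥ 0 of C_ν(d) is attained at d = 0, and its value is C_{8π}(0) = 2π(1 + 4Γ + 2 ln π), where Γ is the Euler–Mascheroni constant. -/

import Mathlib

open Real

/-- The constant `C_ν(d)` from the second-order term of the 2D ground state energy. -/
noncomputable def Cnu (ν d : ℝ) : ℝ :=
  (1 - (1 / (8 * π)) * (Real.sqrt (d * (d + 16 * π)) - d)) * (2 * ν - 16 * π - d)
    + d ^ 2 / (16 * π) + 2 * π + d
    - 4 * π * (Real.log 8 - 2 * Real.eulerMascheroniConstant)
    - (1 / (16 * π)) * d * Real.sqrt (d * (d + 16 * π))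
    - (1 / 2) * Real.sqrt (d * (d + 16 * π))
    + 4 * π * Real.log (d + Real.sqrt (d * (d + 16 * π)) + 8 * π)

/-!
Put `v = (√(d(d + 16π)) - d) / (8π)`, which lies in `[0, 1)` for `d ≥ 0` and vanishes at `d = 0`.
In this variable
`C_ν(d) = const + 2(ν - 8π)(1 - v) + 4π (-log (1 - v) - v - v² / 2)`.
The last bracket is the remainder `v³ / 3 + v⁴ / 4 + ⋯` of the logarithmic series, hence
nonnegative and zero at `v = 0`; when `ν ≤ 8π` the middle term is smallest at `v = 0` as well.
-/

/-- The variable, used with `a = 8π`, that removes the square root from `Cnu`. It equals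
`1 - exp (-θ)` when `d + a = a cosh θ` with `θ ≥ 0`; the scale `a` is kept general. -/
noncomputable def sqrtGap (a d : ℝ) : ℝ :=
  (√(d * (d + 2 * a)) - d) / a

namespace sqrtGap

variable {a d : ℝ}

lemma zero_right (a : ℝ) : sqrtGap a 0 = 0 := by
  simp [sqrtGap]

lemma nonneg (ha : 0 ≤ a) (hd : 0 ≤ d) : 0 ≤ sqrtGap a d :=
  div_nonneg (sub_nonneg.2 (le_sqrt_of_sq_le (by nlinarith))) ha

lemma lt_one (ha : 0 < a) (hd : 0 ≤ d) : sqrtGap a d < 1 := by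
  rw [sqrtGap, div_lt_one ha, sub_lt_iff_lt_add, sqrt_lt' (by positivity)]
  nlinarith

lemma sqrt_eq (ha : a ≠ 0) : √(d * (d + 2 * a)) = d + a * sqrtGap a d := by
  rw [sqrtGap]
  field_simp
  ring

lemma two_mul_mul_one_sub (ha : 0 < a) (hd : 0 ≤ d) :
    2 * d * (1 - sqrtGap a d) = a * sqrtGap a d ^ 2 := by
  have hsq : (d + a * sqrtGap a d) ^ 2 = d * (d + 2 * a) := by
    rw [← sqrt_eq ha.ne', sq_sqrt (by positivity)]
  apply mul_left_cancel₀ ha.ne'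
  linear_combination -hsq

lemma add_sqrt_add (ha : 0 < a) (hd : 0 ≤ d) :
    d + √(d * (d + 2 * a)) + a = a / (1 - sqrtGap a d) := by
  rw [sqrt_eq ha.ne', eq_div_iff (sub_pos.2 (lt_one ha hd)).ne']
  linear_combination two_mul_mul_one_sub ha hd

end sqrtGap

lemma sum_range_pow_div_le_neg_log_one_sub {x : ℝ} (hx₀ : 0 ≤ x) (hx₁ : x < 1) (n : ℕ) :
    ∑ i ∈ Finset.range n, x ^ (i + 1) / (i + 1) ≤ -log (1 - x) :=
  sum_le_hasSum _ (fun i _ ↦ by positivity)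
    (hasSum_pow_div_log_of_abs_lt_one (by rwa [abs_of_nonneg hx₀]))

lemma Cnu_eq (ν : ℝ) {d : ℝ} (hd : 0 ≤ d) :
    Cnu ν d = 2 * π * (1 + 4 * eulerMascheroniConstant + 2 * log π)
      + 2 * (ν - 8 * π) * (1 - sqrtGap (8 * π) d)
      + 4 * π * (-log (1 - sqrtGap (8 * π) d)
        - ∑ i ∈ Finset.range 2, sqrtGap (8 * π) d ^ (i + 1) / (i + 1)) := by
  have ha : 0 < 8 * π := by positivity
  have h16 : 16 * π = 2 * (8 * π) := by ring
  set v := sqrtGap (8 * π) d with hv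
  have hv₁ : 1 - v ≠ 0 := (sub_pos.2 (sqrtGap.lt_one ha hd)).ne'
  have hlog : log (d + √(d * (d + 16 * π)) + 8 * π) = log 8 + log π - log (1 - v) := by
    rw [h16, sqrtGap.add_sqrt_add ha hd, ← hv, log_div ha.ne' hv₁,
      log_mul (by norm_num) pi_ne_zero]
  have hsqrt : √(d * (d + 16 * π)) = d + 8 * π * v := by rw [h16, sqrtGap.sqrt_eq ha.ne']
  have hlinear : 1 - 1 / (8 * π) * (d + 8 * π * v - d) = 1 - v := by
    field_simp
    ring
  have hquadratic : d ^ 2 / (16 * π) - 1 / (16 * π) * d * (d + 8 * π * v) = -(d * v / 2) := by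
    field_simp
    ring
  have hsum : ∑ i ∈ Finset.range 2, v ^ (i + 1) / (i + 1) = v + v ^ 2 / 2 := by
    norm_num [Finset.sum_range_succ]
  rw [Cnu, hlog, hsqrt, hlinear, hsum]
  linear_combination hquadratic - 1 / 4 * sqrtGap.two_mul_mul_one_sub ha hd

lemma Cnu_zero (ν : ℝ) :
    Cnu ν 0 = 2 * π * (1 + 4 * eulerMascheroniConstant + 2 * log π) + 2 * (ν - 8 * π) := by
  simp [Cnu_eq ν le_rfl, sqrtGap.zero_right]

lemma Cnu_zero_le {ν d : ℝ} (hν : ν ≤ 8 * π) (hd : 0 ≤ d) : Cnu ν 0 ≤ Cnu ν d := by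
  have ha : 0 < 8 * π := by positivity
  have hv := sqrtGap.nonneg ha.le hd
  have hmiddle : 2 * (ν - 8 * π) ≤ 2 * (ν - 8 * π) * (1 - sqrtGap (8 * π) d) :=
    le_mul_of_le_one_right (by linarith) (by linarith)
  have hremainder : 0 ≤ 4 * π * (-log (1 - sqrtGap (8 * π) d)
      - ∑ i ∈ Finset.range 2, sqrtGap (8 * π) d ^ (i + 1) / (i + 1)) :=
    mul_nonneg (by positivity)
      (sub_nonneg.2 (sum_range_pow_div_le_neg_log_one_sub hv (sqrtGap.lt_one ha hd) 2))
  rw [Cnu_zero, Cnu_eq ν hd]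
  linarith

theorem Cnu_inf_at_zero_general {ν : ℝ} (hν : ν ≤ 8 * π) :
    IsLeast {c : ℝ | ∃ d : ℝ, 0 ≤ d ∧ c = Cnu ν d} (Cnu ν 0) ∧
      Cnu ν 0 =
        2 * π * (1 + 4 * eulerMascheroniConstant + 2 * log π) + 2 * (ν - 8 * π) := by
  refine ⟨⟨⟨0, le_rfl, rfl⟩, ?_⟩, Cnu_zero ν⟩
  rintro _ ⟨d, hd, rfl⟩
  exact Cnu_zero_le hν hd

/-- for `ν = 8π`, the infimum over `d ≥ 0` of `C_ν(d)` is attained at `d = 0`,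
with value `C_{8π}(0) = 2π(1 + 4Γ + 2 ln π)`. -/
theorem Cnu_inf_at_zero :
    IsLeast {c : ℝ | ∃ d : ℝ, 0 ≤ d ∧ c = Cnu (8 * π) d} (Cnu (8 * π) 0) ∧
      Cnu (8 * π) 0 =
        2 * π * (1 + 4 * Real.eulerMascheroniConstant + 2 * Real.log π) := by
  simpa using Cnu_inf_at_zero_general (le_refl (8 * π))
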